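/- Let (A, ≺_{α,β}, ≻_{α,β}, Ω) be an Ω-relative pre-anti-flexible algebra. Define, for all (α,β) ∈ Ω² and x, y ∈ A, x ▶_{α,β} y := x ≻_{α,β} y − y ≺_{β,α} x. Then (A, ▶_{α,β}, Ω) is an Ω-relative pre-Lie algebra, i.e. (x ▶_{α,β} y) ▶_{αβ,γ} z − x ▶_{α,βγ} (y ▶_{β,γ} z) = (y ▶_{β,α} x) ▶_{βα,γ} z − y ▶_{β,αγ} (x ▶_{α,γ} z) for all x, y, z ∈ A and α, β, γ ∈ Ω. -/

import Mathlib

/-!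
Write `x · y = x ≺ y + x ≻ y`. The two axioms say that the middle associator
`(x ≻ y) ≺ z - x ≻ (y ≺ z)` is symmetric under reversing its arguments, and that reversal carries
the left associator `(x · y) ≻ z - x ≻ (y ≻ z)` to the right one `(x ≺ y) ≺ z - x ≺ (y · z)`.
Since `▶` and `·` have the same commutator, the part of the `▶`-associator that is skew in its first
two arguments is, for arbitrary bilinear `≺` and `≻`, a sum of exactly such defects.
-/

section

variable {k Ω A : Type*} [CommSemiring k] [AddCommGroup A] [Module k A]

/-- The associator `(x g y) f z - x f' (y g' z)` of four families of operations indexed by `Ω²`.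
Allowing four different families makes the left, middle and right associators of a
pre-anti-flexible algebra, as well as the associator of a single family, instances of one notion. -/
def relativeAssociator [Mul Ω] (f g f' g' : Ω → Ω → A →ₗ[k] A →ₗ[k] A)
    (α β γ : Ω) (x y z : A) : A :=
  f (α * β) γ (g α β x y) z - f' α (β * γ) x (g' β γ y z)

/-- The axioms of an `Ω`-relative pre-anti-flexible algebra, as symmetries of associators under
reversal of the arguments; `prec` is `≺` and `succ` is `≻`. -/
structure IsRelativePreAntiFlexible [Mul Ω] (prec succ : Ω → Ω → A →ₗ[k] A →ₗ[k] A) : Prop where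
  middle_reverse (α β γ : Ω) (x y z : A) :
    relativeAssociator prec succ succ prec α β γ x y z =
      relativeAssociator prec succ succ prec γ β α z y x
  left_eq_right_reverse (α β γ : Ω) (x y z : A) :
    relativeAssociator succ (prec + succ) succ succ α β γ x y z =
      relativeAssociator prec prec prec (prec + succ) γ β α z y x

/-- The axiom of an `Ω`-relative (left) pre-Lie algebra: the associator is symmetric in its first
two arguments. -/
def IsRelativePreLie [Mul Ω] (op : Ω → Ω → A →ₗ[k] A →ₗ[k] A) : Prop :=
  ∀ (α β γ : Ω) (x y z : A),
    relativeAssociator op op op op α β γ x y z = relativeAssociator op op op op β α γ y x z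

/-- The operation `x ▶_{α,β} y = x ≻_{α,β} y - y ≺_{β,α} x`, for `prec` as `≺` and `succ` as `≻`;
it is the candidate pre-Lie product. -/
def preLieOp (prec succ : Ω → Ω → A →ₗ[k] A →ₗ[k] A) (α β : Ω) : A →ₗ[k] A →ₗ[k] A :=
  succ α β - (prec β α).flip

theorem preLieOp_apply (prec succ : Ω → Ω → A →ₗ[k] A →ₗ[k] A) (α β : Ω) (x y : A) :
    preLieOp prec succ α β x y = succ α β x y - prec β α y x :=
  rfl

theorem preLieOp_sub_preLieOp_swap (prec succ : Ω → Ω → A →ₗ[k] A →ₗ[k] A) (α β : Ω) (x y : A) :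
    preLieOp prec succ α β x y - preLieOp prec succ β α y x =
      (prec + succ) α β x y - (prec + succ) β α y x := by
  simp only [preLieOp_apply, Pi.add_apply, LinearMap.add_apply]
  abel

theorem relativeAssociator_preLieOp_sub_swap [CommMagma Ω]
    (prec succ : Ω → Ω → A →ₗ[k] A →ₗ[k] A) (α β γ : Ω) (x y z : A) :
    let op := preLieOp prec succ
    let left := relativeAssociator succ (prec + succ) succ succ
    let middle := relativeAssociator prec succ succ prec
    let right := relativeAssociator prec prec prec (prec + succ)
    relativeAssociator op op op op α β γ x y z - relativeAssociator op op op op β α γ y x z =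
      (left α β γ x y z - right γ β α z y x) - (left β α γ y x z - right γ α β z x y) +
        (middle β γ α y z x - middle α γ β x z y) := by
  intro op left middle right
  have commutator : op (α * β) γ (op α β x y) z - op (β * α) γ (op β α y x) z =
      op (α * β) γ ((prec + succ) α β x y - (prec + succ) β α y x) z := by
    rw [mul_comm β α, ← preLieOp_sub_preLieOp_swap, map_sub, LinearMap.sub_apply]
  calc
    _ = (op (α * β) γ (op α β x y) z - op (β * α) γ (op β α y x) z) -
          (op α (β * γ) x (op β γ y z) - op β (α * γ) y (op α γ x z)) :=
      sub_sub_sub_comm ..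
    _ = op (α * β) γ ((prec + succ) α β x y - (prec + succ) β α y x) z -
          (op α (β * γ) x (op β γ y z) - op β (α * γ) y (op α γ x z)) := by
      rw [commutator]
    _ = _ := by
      simp only [op, left, middle, right, relativeAssociator, preLieOp_apply, map_sub,
        LinearMap.sub_apply, mul_comm β α, mul_comm γ α, mul_comm γ β]
      abel

theorem relativePreAntiFlexible_to_relativePreLie_general [CommMagma Ω]
    {prec succ : Ω → Ω → A →ₗ[k] A →ₗ[k] A} (h : IsRelativePreAntiFlexible prec succ) :
    IsRelativePreLie (preLieOp prec succ) := by
  intro α β γ x y z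
  rw [← sub_eq_zero, relativeAssociator_preLieOp_sub_swap,
    h.left_eq_right_reverse α β γ x y z, h.left_eq_right_reverse β α γ y x z,
    h.middle_reverse β γ α y z x]
  simp only [sub_self, add_zero]

end

/-- `x ▶_{α,β} y := x ≻_{α,β} y − y ≺_{β,α} x` turns an Ω-relative
pre-anti-flexible algebra into an Ω-relative pre-Lie algebra. -/
theorem relativePreAntiFlexible_to_relativePreLie
    (k : Type*) [Field k] (Ω : Type*) [CommSemigroup Ω]
    (A : Type*) [AddCommGroup A] [Module k A]
    (prec succ : Ω → Ω → A →ₗ[k] A →ₗ[k] A)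
    (h1 : ∀ (α β γ : Ω) (x y z : A),
      prec (α * β) γ (succ α β x y) z - succ α (β * γ) x (prec β γ y z) =
        prec (γ * β) α (succ γ β z y) x - succ γ (β * α) z (prec β α y x))
    (h2 : ∀ (α β γ : Ω) (x y z : A),
      succ (α * β) γ (prec α β x y + succ α β x y) z - succ α (β * γ) x (succ β γ y z) =
        prec (γ * β) α (prec γ β z y) x - prec γ (β * α) z (prec β α y x + succ β α y x))
    (tri : Ω → Ω → A → A → A)
    (htri : ∀ (α β : Ω) (x y : A), tri α β x y = succ α β x y - prec β α y x) :
    ∀ (α β γ : Ω) (x y z : A),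
      tri (α * β) γ (tri α β x y) z - tri α (β * γ) x (tri β γ y z) =
        tri (β * α) γ (tri β α y x) z - tri β (α * γ) y (tri α γ x z) := by
  obtain rfl : tri = fun α β x y => preLieOp prec succ α β x y := by funext; exact htri ..
  exact relativePreAntiFlexible_to_relativePreLie_general ⟨h1, h2⟩
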